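/- Let (Z, ι, κ) be an initial Kruskal fixed point of a normal PO-dilator W over a partial order X, let (Z', ι', κ') be another Kruskal fixed point of W over X, and let f : Z → Z' be the unique quasi embedding with f ∘ ι = ι' and f ∘ κ = κ' ∘ W(f). If x ≤_X y implies ι'(x) ≤_{Z'} ι'(y) for all x, y ∈ X, then f is an embedding. -/

import Mathlib

universe u

/-- A bundled partial order. -/
structure POrd : Type (u + 1) where
  carrier : Type u
  [str : PartialOrder carrier]

instance : CoeSort POrd.{u} (Type u) := ⟨POrd.carrier⟩
attribute [instance] POrd.str

def POrd.of (X : Type u) [PartialOrder X] : POrd.{u} := ⟨X⟩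

/-- A quasi embedding of partial orders. -/
def QuasiEmb {X Y : Type*} [PartialOrder X] [PartialOrder Y] (f : X → Y) : Prop :=
  ∀ x y : X, f x ≤ f y → x ≤ y

/-- An embedding of partial orders. -/
def IsEmb {X Y : Type*} [PartialOrder X] [PartialOrder Y] (f : X → Y) : Prop :=
  ∀ x y : X, x ≤ y ↔ f x ≤ f y

theorem quasiEmb_id {X : Type*} [PartialOrder X] : QuasiEmb (id : X → X) :=
  fun _ _ h => h

theorem QuasiEmb.comp {X Y Z : Type*} [PartialOrder X] [PartialOrder Y] [PartialOrder Z]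
    {f : X → Y} {g : Y → Z} (hf : QuasiEmb f) (hg : QuasiEmb g) :
    QuasiEmb (g ∘ f) := fun x y h => hf x y (hg _ _ h)

/-- `LeFin a b` is the relation `a ≤ᶠⁱⁿ b` on subsets of a partial order. -/
def LeFin {X : Type*} [PartialOrder X] (a b : Set X) : Prop :=
  ∀ x ∈ a, ∃ y ∈ b, x ≤ y

/-- A PO-dilator: an embedding-preserving functor on partial orders with quasi embeddings,
together with a natural finite support. -/
structure PODilator : Type (u + 1) where
  obj : POrd.{u} → POrd.{u}
  map : {X Y : POrd.{u}} → (f : X → Y) → QuasiEmb f → (obj X → obj Y)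
  supp : {X : POrd.{u}} → obj X → Set X
  map_quasiEmb : ∀ {X Y : POrd.{u}} (f : X → Y) (hf : QuasiEmb f), QuasiEmb (map f hf)
  map_id : ∀ (X : POrd.{u}), map (id : X → X) quasiEmb_id = id
  map_comp : ∀ {X Y Z : POrd.{u}} (f : X → Y) (g : Y → Z) (hf : QuasiEmb f) (hg : QuasiEmb g),
      map (g ∘ f) (hf.comp hg) = map g hg ∘ map f hf
  map_emb : ∀ {X Y : POrd.{u}} (f : X → Y) (hf : QuasiEmb f), IsEmb f → IsEmb (map f hf)
  supp_finite : ∀ {X : POrd.{u}} (σ : obj X), (supp σ).Finite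
  supp_natural : ∀ {X Y : POrd.{u}} (f : X → Y) (hf : QuasiEmb f) (σ : obj X),
      supp (map f hf σ) = f '' supp σ
  supp_cond : ∀ {X Y : POrd.{u}} (f : X → Y) (hf : QuasiEmb f), IsEmb f →
      ∀ σ : obj Y, supp σ ⊆ Set.range f → σ ∈ Set.range (map f hf)

/-- Normality of a PO-dilator. -/
def PODilator.IsNormal (W : PODilator.{u}) : Prop :=
  ∀ (X : POrd.{u}) (σ τ : W.obj X), σ ≤ τ → LeFin (W.supp σ) (W.supp τ)

/-- Well partial orders. -/
def IsWpo (X : Type*) [PartialOrder X] : Prop :=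
  ∀ f : ℕ → X, ∃ i j : ℕ, i < j ∧ f i ≤ f j

/-- A WPO-dilator preserves well partial orders. -/
def PODilator.IsWPO (W : PODilator.{u}) : Prop :=
  ∀ X : POrd.{u}, IsWpo X → IsWpo (W.obj X)

/-- Kruskal fixed point of `W` over `X`. -/
structure IsKruskalFP (W : PODilator.{u}) (X Z : POrd.{u})
    (ι : X → Z) (κ : W.obj Z → Z) : Prop where
  range_disjoint : Set.range ι ∩ Set.range κ = ∅
  iota_le : ∀ x y : X, ι x ≤ ι y → x ≤ y
  iota_kappa : ∀ (x : X) (τ : W.obj Z), ι x ≤ κ τ ↔ ∃ z ∈ W.supp τ, ι x ≤ z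
  kappa_iota : ∀ (σ : W.obj Z) (y : X), ¬ κ σ ≤ ι y
  kappa_kappa : ∀ σ τ : W.obj Z, κ σ ≤ κ τ ↔ (σ ≤ τ ∨ ∃ z ∈ W.supp τ, κ σ ≤ z)

/-- Condition (i) of Theorem 3.5. -/
structure KFPCondI (W : PODilator.{u}) (X Z : POrd.{u})
    (ι : X → Z) (κ : W.obj Z → Z) : Prop where
  range_union : Set.range ι ∪ Set.range κ = Set.univ
  iota_mono : ∀ x y : X, x ≤ y → ι x ≤ ι y
  height : ∃ h : Z → ℕ, ∀ (s : Z) (σ : W.obj Z), s ∈ W.supp σ → h s < h (κ σ)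

/-- Initial Kruskal fixed points. -/
def IsInitialKFP (W : PODilator.{u}) (X Z : POrd.{u})
    (ι : X → Z) (κ : W.obj Z → Z) : Prop :=
  IsKruskalFP W X Z ι κ ∧
  ∀ (Z' : POrd.{u}) (ι' : X → Z') (κ' : W.obj Z' → Z'), IsKruskalFP W X Z' ι' κ' →
    ∃! f : Z → Z', ∃ hf : QuasiEmb f, f ∘ ι = ι' ∧ f ∘ κ = κ' ∘ W.map f hf

/-!
Initiality makes every element of `Z` reachable from `ι` and `κ` in finitely many steps: the
reachable elements form a Kruskal fixed point themselves, and the quasi embedding of `Z` into it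
composes with the inclusion to the identity, by uniqueness. One then shows that `f` is monotone on
the set of elements reachable in `n` steps, by induction on `n`. If `κ σ ≤ κ τ` holds because of
`σ ≤ τ`, then `f` restricts to an embedding of a set containing both supports, and a dilator
preserves embeddings, so `W(f)(σ) ≤ W(f)(τ)`. Otherwise `κ σ` lies below an element of the support
of `τ`, which calls for a second induction, on the number of steps needed for the larger element.
-/

theorem isEmb_subtype_val {Z : Type*} [PartialOrder Z] (A : Set Z) :
    IsEmb (Subtype.val : A → Z) := fun _ _ => Iff.rfl

theorem IsEmb.quasiEmb {X Y : Type*} [PartialOrder X] [PartialOrder Y] {f : X → Y}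
    (hf : IsEmb f) : QuasiEmb f := fun x y => (hf x y).2

theorem PODilator.map_le_map_of_monotoneOn (W : PODilator.{u}) {Y Z : POrd.{u}} {f : Y → Z}
    (hf : QuasiEmb f) {A : Set Y} (hA : MonotoneOn f A) {σ τ : W.obj Y}
    (hσ : W.supp σ ⊆ A) (hτ : W.supp τ ⊆ A) (hle : σ ≤ τ) : W.map f hf σ ≤ W.map f hf τ := by
  let i : POrd.of A → Y := Subtype.val
  have hi : IsEmb i := isEmb_subtype_val A
  have hfi : IsEmb (f ∘ i) :=
    fun s t => ⟨fun hst => hA s.2 t.2 hst, hi.quasiEmb.comp hf s t⟩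
  have mem_range {ρ : W.obj Y} (hρ : W.supp ρ ⊆ A) : ρ ∈ Set.range (W.map i hi.quasiEmb) :=
    W.supp_cond i hi.quasiEmb hi ρ (hρ.trans Subtype.range_val.ge)
  obtain ⟨σ₀, rfl⟩ := mem_range hσ
  obtain ⟨τ₀, rfl⟩ := mem_range hτ
  have hle₀ : σ₀ ≤ τ₀ := W.map_quasiEmb i hi.quasiEmb _ _ hle
  have hmap := (W.map_emb (f ∘ i) (hi.quasiEmb.comp hf) hfi σ₀ τ₀).1 hle₀
  rwa [W.map_comp i f hi.quasiEmb hf] at hmap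

section

variable {W : PODilator.{u}} {X Z : POrd.{u}} {ι : X → Z} {κ : W.obj Z → Z}

theorem IsKruskalFP.of_isEmb (h : IsKruskalFP W X Z ι κ) {S : POrd.{u}} {i : S → Z}
    (hi : IsEmb i) {ι₀ : X → S} {κ₀ : W.obj S → S} (hι : ∀ x, i (ι₀ x) = ι x)
    (hκ : ∀ σ, i (κ₀ σ) = κ (W.map i hi.quasiEmb σ)) : IsKruskalFP W X S ι₀ κ₀ where
  range_disjoint := by
    refine Set.disjoint_iff_inter_eq_empty.1 (Set.disjoint_range_iff.2 fun x σ hxσ => ?_)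
    refine Set.disjoint_range_iff.1 (Set.disjoint_iff_inter_eq_empty.2 h.range_disjoint) x
      (W.map i hi.quasiEmb σ) ?_
    rw [← hι, ← hκ, hxσ]
  iota_le x y hxy := h.iota_le x y (by rwa [← hι, ← hι, ← hi])
  iota_kappa x τ := by
    simp only [hi _ _, hι, hκ, h.iota_kappa, W.supp_natural, Set.exists_mem_image]
  kappa_iota σ y := by
    simpa only [hi _ _, hι, hκ] using h.kappa_iota _ y
  kappa_kappa σ τ := by
    simp only [hi _ _, hκ, h.kappa_kappa, W.supp_natural, Set.exists_mem_image,
      ← W.map_emb i hi.quasiEmb hi σ τ]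

theorem IsInitialKFP.induction (h : IsInitialKFP W X Z ι κ) {p : Z → Prop}
    (iota : ∀ x, p (ι x)) (kappa : ∀ σ, (∀ s ∈ W.supp σ, p s) → p (κ σ)) (z : Z) : p z := by
  let S : POrd.{u} := POrd.of {z | p z}
  let i : S → Z := Subtype.val
  have hi : IsEmb i := isEmb_subtype_val {z | p z}
  have supp_map (σ : W.obj S) : ∀ s ∈ W.supp (W.map i hi.quasiEmb σ), p s := by
    rw [W.supp_natural]
    rintro _ ⟨s, -, rfl⟩
    exact s.2
  let ι₀ : X → S := fun x => ⟨ι x, iota x⟩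
  let κ₀ : W.obj S → S := fun σ => ⟨κ (W.map i hi.quasiEmb σ), kappa _ (supp_map σ)⟩
  obtain ⟨g, ⟨hg, hgι, hgκ⟩, -⟩ :=
    h.2 S ι₀ κ₀ (h.1.of_isEmb hi (fun _ => rfl) (fun _ => rfl))
  have hig : i ∘ g = id := by
    refine (h.2 Z ι κ h.1).unique ⟨hg.comp hi.quasiEmb, ?_, ?_⟩ ⟨quasiEmb_id, rfl, ?_⟩
    · rw [Function.comp_assoc, hgι]
      rfl
    · rw [Function.comp_assoc, hgκ, W.map_comp g i hg hi.quasiEmb]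
      rfl
    · rw [W.map_id]
      rfl
  have hz : i (g z) = z := congrFun hig z
  exact hz ▸ (g z).2

/-- The elements obtained from `A` by one application of `ι` or `κ`, where `κ` may be applied to
the elements of `W(Z)` with support in `A`. Its iterates measure how an element is generated. -/
def kruskalStep (ι : X → Z) (κ : W.obj Z → Z) (A : Set Z) : Set Z :=
  Set.range ι ∪ κ '' {σ | W.supp σ ⊆ A}

/-- The elements that `ι` and `κ` generate in at most `n` steps, which serve as a height for
inductive arguments. Stage `0` is empty, and stage `1` contains the range of `ι`. -/
def kruskalStage (ι : X → Z) (κ : W.obj Z → Z) (n : ℕ) : Set Z :=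
  (kruskalStep ι κ)^[n] ∅

theorem kruskalStep_mono : Monotone (kruskalStep ι κ) := fun _ _ hAB =>
  Set.union_subset_union_right _ (Set.image_mono fun _ hσ => hσ.trans hAB)

theorem kruskalStage_succ (n : ℕ) :
    kruskalStage ι κ (n + 1) = kruskalStep ι κ (kruskalStage ι κ n) :=
  Function.iterate_succ_apply' _ _ _

theorem kruskalStage_mono : Monotone (kruskalStage ι κ) :=
  kruskalStep_mono.monotone_iterate_of_le_map (Set.empty_subset _)

theorem exists_kappa_mem_kruskalStage {σ : W.obj Z}
    (hσ : ∀ s ∈ W.supp σ, ∃ n, s ∈ kruskalStage ι κ n) : ∃ n, κ σ ∈ kruskalStage ι κ n := by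
  choose! n hn using hσ
  obtain ⟨N, hN⟩ := ((W.supp_finite σ).image n).bddAbove
  have hsupp : W.supp σ ⊆ kruskalStage ι κ N := fun s hs =>
    kruskalStage_mono (hN (Set.mem_image_of_mem n hs)) (hn s hs)
  refine ⟨N + 1, ?_⟩
  rw [kruskalStage_succ]
  exact Or.inr (Set.mem_image_of_mem κ hsupp)

theorem IsInitialKFP.exists_mem_kruskalStage (h : IsInitialKFP W X Z ι κ) (z : Z) :
    ∃ n, z ∈ kruskalStage ι κ n :=
  h.induction (p := fun z => ∃ n, z ∈ kruskalStage ι κ n)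
    (fun x => ⟨1, Or.inl (Set.mem_range_self x)⟩)
    (fun _ => exists_kappa_mem_kruskalStage) z

variable {Z' : POrd.{u}} {ι' : X → Z'} {κ' : W.obj Z' → Z'} {f : Z → Z'}

theorem IsKruskalFP.map_le_map_kappa (h : IsKruskalFP W X Z ι κ) (h' : IsKruskalFP W X Z' ι' κ')
    (hf : QuasiEmb f) (hfι : f ∘ ι = ι') (hfκ : f ∘ κ = κ' ∘ W.map f hf)
    {A : Set Z} (hA : MonotoneOn f A) {s : Z} (hs : s ∈ kruskalStep ι κ A)
    {τ : W.obj Z} (hτ : W.supp τ ⊆ A) (hsupp : ∀ z ∈ W.supp τ, s ≤ z → f s ≤ f z)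
    (hle : s ≤ κ τ) : f s ≤ f (κ τ) := by
  have hfι (x : X) : f (ι x) = ι' x := congrFun hfι x
  have hfκ (σ : W.obj Z) : f (κ σ) = κ' (W.map f hf σ) := congrFun hfκ σ
  have below_supp : (∃ z ∈ W.supp τ, s ≤ z) → ∃ z ∈ W.supp (W.map f hf τ), f s ≤ z := by
    rintro ⟨z, hz, hsz⟩
    rw [W.supp_natural]
    exact ⟨f z, Set.mem_image_of_mem f hz, hsupp z hz hsz⟩
  rcases hs with ⟨x, rfl⟩ | ⟨σ, hσ, rfl⟩
  · rw [hfι] at below_supp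
    rw [hfι, hfκ, h'.iota_kappa]
    exact below_supp ((h.iota_kappa x τ).1 hle)
  · rw [hfκ] at below_supp
    rw [hfκ, hfκ, h'.kappa_kappa]
    exact ((h.kappa_kappa σ τ).1 hle).imp (W.map_le_map_of_monotoneOn hf hA hσ hτ) below_supp

theorem IsKruskalFP.map_le_map_iota (h : IsKruskalFP W X Z ι κ) (hfι : Monotone (f ∘ ι))
    {A : Set Z} {s : Z} (hs : s ∈ kruskalStep ι κ A) {y : X} (hle : s ≤ ι y) :
    f s ≤ f (ι y) := by
  rcases hs with ⟨x, rfl⟩ | ⟨σ, -, rfl⟩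
  · exact hfι (h.iota_le x y hle)
  · exact (h.kappa_iota σ y hle).elim

theorem IsKruskalFP.monotoneOn_kruskalStage (h : IsKruskalFP W X Z ι κ)
    (h' : IsKruskalFP W X Z' ι' κ') (hf : QuasiEmb f) (hfι : f ∘ ι = ι')
    (hfκ : f ∘ κ = κ' ∘ W.map f hf) (hι' : Monotone ι') (n : ℕ) :
    MonotoneOn f (kruskalStage ι κ n) := by
  induction n with
  | zero => exact fun s hs => hs.elim
  | succ n ih =>
    suffices ∀ m ≤ n + 1, ∀ s ∈ kruskalStage ι κ (n + 1), ∀ t ∈ kruskalStage ι κ m,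
        s ≤ t → f s ≤ f t from fun s hs t ht => this (n + 1) le_rfl s hs t ht
    intro m
    induction m with
    | zero => exact fun _ s _ t ht => ht.elim
    | succ m ihm =>
      intro hm s hs t ht hst
      have hs' := kruskalStage_succ n ▸ hs
      rw [kruskalStage_succ] at ht
      rcases ht with ⟨y, rfl⟩ | ⟨τ, hτ, rfl⟩
      · exact h.map_le_map_iota (hfι ▸ hι') hs' hst
      · have hτn : W.supp τ ⊆ kruskalStage ι κ n :=
          hτ.trans (kruskalStage_mono (Nat.le_of_succ_le_succ hm))
        exact h.map_le_map_kappa h' hf hfι hfκ ih hs' hτn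
          (fun z hz => ihm (Nat.le_of_succ_le hm) s hs z (hτ hz)) hst

theorem initial_kruskalFP_map_isEmb_general (h : IsKruskalFP W X Z ι κ)
    (hgen : ∀ z, ∃ n, z ∈ kruskalStage ι κ n) (h' : IsKruskalFP W X Z' ι' κ')
    (hf : QuasiEmb f) (hfι : f ∘ ι = ι') (hfκ : f ∘ κ = κ' ∘ W.map f hf)
    (hι' : Monotone ι') : IsEmb f := by
  refine fun s t => ⟨fun hst => ?_, hf s t⟩
  obtain ⟨m, hs⟩ := hgen s
  obtain ⟨n, ht⟩ := hgen t
  exact h.monotoneOn_kruskalStage h' hf hfι hfκ hι' (max m n)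
    (kruskalStage_mono (le_max_left m n) hs) (kruskalStage_mono (le_max_right m n) ht) hst

end

/-- If the second Kruskal fixed point has a monotone `ι'`, then the unique quasi
embedding out of an initial Kruskal fixed point is an embedding. -/
theorem initial_kruskalFP_map_isEmb (W : PODilator.{u}) (hW : W.IsNormal)
    (X Z Z' : POrd.{u}) (ι : X → Z) (κ : W.obj Z → Z)
    (h : IsInitialKFP W X Z ι κ)
    (ι' : X → Z') (κ' : W.obj Z' → Z') (h' : IsKruskalFP W X Z' ι' κ')
    (f : Z → Z') (hf : QuasiEmb f)
    (hfι : f ∘ ι = ι') (hfκ : f ∘ κ = κ' ∘ W.map f hf)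
    (hmono : ∀ x y : X, x ≤ y → ι' x ≤ ι' y) :
    IsEmb f :=
  initial_kruskalFP_map_isEmb_general h.1 h.exists_mem_kruskalStage h' hf hfι hfκ hmono
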